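/- Let p : X̃ → X be a nontrivial harmonic G-cover with abelian Galois group G, defined by a dilated G-voltage assignment η. Let F ⊆ E(X) and let X∖F = X₁ ⊔ ⋯ ⊔ X_k be the decomposition into connected components. Then F is a basis of the matroid M*(X̃/X) if and only if each Xᵢ is exactly one of: (1) a graph of genus one having no dilated vertices and such that the oriented sum η(Xᵢ) of the voltages along the unique cycle of Xᵢ is not the identity; (2) a tree containing a unique dilated vertex. -/

import Mathlib

/-!
The cover is trivial over a component `C` of `X ∖ F` exactly when no vertex of `C` is dilated and
the voltages on `C` are the increments of a potential `φ : V → G` (`gNontrivialAt_iff`). Indeed `G`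
permutes the connected components of the preimage of `C` transitively, so there are `|G|` of them
iff no nontrivial element carries a lifted vertex into its own component; path lifting translates
this into the condition on dilation and voltages. Two formal consequences follow: deleting more
edges preserves triviality (`Triv.anti`), and `F` is a basis iff no component of `X ∖ F` is trivial
while deleting any further edge makes the component of one of its end points trivial
(`isBasisD_iff`).

On the graph side, the genus `|E| + 1 - |V|` of a component (`chi`) is nonnegative, drops by one
when a non-bridge is deleted, is additive when a bridge is deleted, and vanishes iff all edges are
bridges. On such trees potentials always exist, so an undilated tree is trivial (`triv_of_chi`).

Let `F` be a basis. In a component with a dilated vertex every edge is a bridge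
(`allBridges_of_dilated`), and two dilated vertices could be separated by deleting a single edge
(`dilated_unique`). In a component without dilated vertices there is a non-bridge; were the genus
larger than one, two edges could be deleted together without disconnecting the component, and the
potentials left by deleting each of them alone would combine to a global one (`chi_eq_one`). For
the same reason the voltage of a cycle is not the identity (`cycle_voltage_ne_one`). Conversely,
components of the two kinds are nontrivial (`not_triv_of_cycles` for the first), and deleting any
edge leaves an undilated tree at one of its end points (`triv_of_genus_one`, `triv_of_tree`).
-/

set_option autoImplicit false
set_option maxHeartbeats 1000000

/-- A graph in the sense of Serre: a finite set of vertices, a finite set of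
half-edges with a fixed-point-free involution, and a root map. -/
structure SerreGraph where
  V : Type
  H : Type
  fintypeV : Fintype V
  fintypeH : Fintype H
  decEqV : DecidableEq V
  decEqH : DecidableEq H
  inv : H → H
  inv_inv : ∀ h, inv (inv h) = h
  inv_ne : ∀ h, inv h ≠ h
  root : H → V

attribute [instance] SerreGraph.fintypeV SerreGraph.fintypeH SerreGraph.decEqV SerreGraph.decEqH

namespace SerreGraph

/-- Edges are orbits `{h, inv h}` of the involution. -/
def Edge (X : SerreGraph) : Type := Quot (fun h h' : X.H => h' = X.inv h)

/-- The edge underlying a half-edge. -/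
def edgeOf (X : SerreGraph) (h : X.H) : X.Edge := Quot.mk _ h

lemma edgeOf_surjective (X : SerreGraph) : Function.Surjective X.edgeOf :=
  fun e => Quot.exists_rep e

lemma edgeOf_inv (X : SerreGraph) (h : X.H) : X.edgeOf (X.inv h) = X.edgeOf h :=
  Quot.sound (X.inv_inv h).symm

instance (X : SerreGraph) : Finite X.Edge := Quot.finite _
noncomputable instance (X : SerreGraph) : Fintype X.Edge := Fintype.ofFinite _
noncomputable instance (X : SerreGraph) : DecidableEq X.Edge := Classical.decEq _

/-- One step of adjacency in the graph obtained by deleting the edges in `F`. -/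
def adjStep (X : SerreGraph) (F : Finset X.Edge) (u v : X.V) : Prop :=
  ∃ h : X.H, X.root h = u ∧ X.root (X.inv h) = v ∧ X.edgeOf h ∉ F

/-- `u` and `v` lie in the same connected component of `X ∖ F`. -/
def compRel (X : SerreGraph) (F : Finset X.Edge) (u v : X.V) : Prop :=
  Relation.ReflTransGen (X.adjStep F) u v

/-- A graph is connected if it is nonempty and any two vertices are joined by a path. -/
def Connected (X : SerreGraph) : Prop :=
  Nonempty X.V ∧ ∀ u v : X.V, X.compRel ∅ u v

/-- The vertex set of the connected component of `v` in `X ∖ F`. -/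
noncomputable def compVerts (X : SerreGraph) (F : Finset X.Edge) (v : X.V) : Finset X.V :=
  (Set.toFinite {u | X.compRel F v u}).toFinset

/-- The set of connected components (as vertex sets) of `X ∖ F`. -/
noncomputable def components (X : SerreGraph) (F : Finset X.Edge) : Finset (Finset X.V) :=
  Finset.univ.image (X.compVerts F)

/-- The edges of `X ∖ F` belonging to a component with vertex set `C`. -/
noncomputable def edgesIn (X : SerreGraph) (F : Finset X.Edge) (C : Finset X.V) :
    Finset X.Edge :=
  (Set.toFinite {e | e ∉ F ∧ ∃ h, X.edgeOf h = e ∧ X.root h ∈ C}).toFinset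

/-- A spanning tree: a spanning-connected set of edges of cardinality `|V| - 1`. -/
def IsSpanningTree (X : SerreGraph) (T : Finset X.Edge) : Prop :=
  (∀ u v : X.V, Relation.ReflTransGen
      (fun a b => ∃ h, X.root h = a ∧ X.root (X.inv h) = b ∧ X.edgeOf h ∈ T) u v) ∧
  T.card + 1 = Fintype.card X.V

noncomputable def spanningTrees (X : SerreGraph) : Finset (Finset X.Edge) :=
  (Set.toFinite {T | X.IsSpanningTree T}).toFinset

/-- The number of spanning trees of `X`; by Kirchhoff's theorem this is `|Jac(X)|`. -/
noncomputable def numSpanningTrees (X : SerreGraph) : ℕ := X.spanningTrees.card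

/-- The genus `g(X) = |E(X)| - |V(X)| + 1` of a (connected) graph. -/
noncomputable def genus (X : SerreGraph) : ℕ :=
  Fintype.card X.Edge + 1 - Fintype.card X.V

/-- The Jacobian polynomial `J_X = ∑_T ∏_{e ∉ T} x_e`, summed over spanning trees. -/
noncomputable def jacobianPoly (X : SerreGraph) (R : Type) [CommRing R] :
    MvPolynomial X.Edge R :=
  ∑ T ∈ X.spanningTrees, ∏ e ∈ Tᶜ, MvPolynomial.X e

/-- A closed path: a nonempty list of half-edges, consecutively matched head-to-tail,
including from the last one back to the first. -/
def IsClosedPath (X : SerreGraph) (l : List X.H) : Prop :=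
  l ≠ [] ∧ List.Chain' (fun a b => X.root (X.inv a) = X.root b) (l ++ l.take 1)

/-- A cycle with pairwise distinct edges, all belonging to `S`. -/
def IsEdgeCycle (X : SerreGraph) (S : Finset X.Edge) (l : List X.H) : Prop :=
  X.IsClosedPath l ∧ (∀ h ∈ l, X.edgeOf h ∈ S) ∧ (l.map X.edgeOf).Nodup

/-- An edge is a loop if its two root vertices coincide. -/
def IsLoop (X : SerreGraph) (e : X.Edge) : Prop :=
  ∃ h, X.edgeOf h = e ∧ X.root h = X.root (X.inv h)

/-- An orientation: a choice of half-edge (source half) for every edge. -/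
structure Orientation (X : SerreGraph) where
  pick : X.Edge → X.H
  pick_spec : ∀ e, X.edgeOf (pick e) = e

/-- The voltage of a half-edge: `η(e)` if it is traversed in the chosen orientation,
`η(e)⁻¹` otherwise. -/
def halfVoltage {G : Type} [Group G] (X : SerreGraph) (o : X.Orientation)
    (η : X.Edge → G) (h : X.H) : G :=
  if h = o.pick (X.edgeOf h) then η (X.edgeOf h) else (η (X.edgeOf h))⁻¹

/-- The (Frobenius) voltage of a path of half-edges. -/
def pathVoltage {G : Type} [Group G] (X : SerreGraph) (o : X.Orientation)
    (η : X.Edge → G) (l : List X.H) : G :=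
  (l.map (X.halfVoltage o η)).prod

/-- A morphism of Serre graphs. -/
structure Hom (X Y : SerreGraph) where
  vMap : X.V → Y.V
  hMap : X.H → Y.H
  hMap_inv : ∀ h, hMap (X.inv h) = Y.inv (hMap h)
  root_hMap : ∀ h, Y.root (hMap h) = vMap (X.root h)

/-- The induced map on edges. -/
def Hom.edgeMap {X Y : SerreGraph} (f : Hom X Y) : X.Edge → Y.Edge :=
  Quot.map f.hMap (fun a b hab => by rw [hab, f.hMap_inv])

/-- A morphism is harmonic with local degree function `d` if for every vertex `v`
upstairs and every half-edge `h` rooted at its image, `d v` is the number of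
half-edges at `v` mapping to `h`. -/
structure IsHarmonic {X Y : SerreGraph} (f : Hom X Y) (d : X.V → ℕ) : Prop where
  pos : ∀ v, 0 < d v
  balanced : ∀ (v : X.V) (h : Y.H), Y.root h = f.vMap v →
    d v = Nat.card {h' : X.H // X.root h' = v ∧ f.hMap h' = h}

/-- A harmonic Galois cover with Galois group `G`: a harmonic morphism of degree `|G|`
together with an equivariant `G`-action that is transitive on vertex fibers and simply
transitive on edge fibers. -/
structure GCover (G : Type) [Group G] [Fintype G] (Xt X : SerreGraph)
    extends Hom Xt X where
  d : Xt.V → ℕ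
  harm : IsHarmonic toHom d
  deg_eq : ∀ v : X.V,
    ∑ w ∈ Finset.univ.filter (fun w => toHom.vMap w = v), d w = Fintype.card G
  smulV : G → Xt.V → Xt.V
  smulH : G → Xt.H → Xt.H
  one_smulV : ∀ w, smulV 1 w = w
  mul_smulV : ∀ g g' w, smulV (g * g') w = smulV g (smulV g' w)
  one_smulH : ∀ h, smulH 1 h = h
  mul_smulH : ∀ g g' h, smulH (g * g') h = smulH g (smulH g' h)
  smulH_inv : ∀ g h, smulH g (Xt.inv h) = Xt.inv (smulH g h)
  root_smulH : ∀ g h, Xt.root (smulH g h) = smulV g (Xt.root h)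
  vMap_smulV : ∀ g w, toHom.vMap (smulV g w) = toHom.vMap w
  hMap_smulH : ∀ g h, toHom.hMap (smulH g h) = toHom.hMap h
  d_smulV : ∀ g w, d (smulV g w) = d w
  vertex_trans : ∀ w w' : Xt.V, toHom.vMap w = toHom.vMap w' → ∃ g, smulV g w = w'
  edge_trans : ∀ ht ht' : Xt.H,
    (toHom.hMap ht' = toHom.hMap ht ∨ toHom.hMap ht' = X.inv (toHom.hMap ht)) →
    ∃ g, smulH g ht = ht' ∨ smulH g ht = Xt.inv ht'
  edge_free : ∀ (g : G) (ht : Xt.H),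
    (smulH g ht = ht ∨ smulH g ht = Xt.inv ht) → g = 1

namespace GCover

variable {G : Type} [Group G] [Fintype G] {Xt X : SerreGraph}

/-- The cover is free if all local degrees are one. -/
def IsFree (c : GCover G Xt X) : Prop := ∀ w, c.d w = 1

/-- The dilation subgroup of a vertex: the common stabilizer of the vertices in its fiber. -/
def dilation (c : GCover G Xt X) (v : X.V) : Set G :=
  {g | ∀ w : Xt.V, c.vMap w = v → c.smulV g w = w}

/-- One step of adjacency upstairs, through half-edges lying over `X ∖ F`. -/
def liftStep (c : GCover G Xt X) (F : Finset X.Edge) (a b : Xt.V) : Prop :=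
  ∃ ht : Xt.H, Xt.root ht = a ∧ Xt.root (Xt.inv ht) = b ∧ X.edgeOf (c.hMap ht) ∉ F

/-- The number of connected components of the preimage of the component of `v` in `X ∖ F`. -/
noncomputable def numLiftComponents (c : GCover G Xt X) (F : Finset X.Edge) (v : X.V) : ℕ :=
  Nat.card (Quot (fun a b : {w : Xt.V // X.compRel F v (c.vMap w)} => c.liftStep F a.1 b.1))

/-- The connected component of `v` in `X ∖ F` is `G`-nontrivial, i.e. the restriction of the
cover over it is not isomorphic to the trivial `G`-cover (equivalently, its preimage does
not have exactly `|G|` connected components). -/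
def GNontrivialAt (c : GCover G Xt X) (F : Finset X.Edge) (v : X.V) : Prop :=
  c.numLiftComponents F v ≠ Fintype.card G

/-- Independent sets of the matroid `M*(X̃/X)`. -/
def Indep (c : GCover G Xt X) (F : Finset X.Edge) : Prop :=
  ∀ v : X.V, c.GNontrivialAt F v

/-- Bases of the matroid `M*(X̃/X)`: maximal independent sets. -/
def IsBasisD (c : GCover G Xt X) (F : Finset X.Edge) : Prop :=
  c.Indep F ∧ ∀ F' : Finset X.Edge, F ⊆ F' → c.Indep F' → F' = F

/-- The dilated `G`-voltage assignment `η` (together with a section `σ` of the vertex map)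
represents the cover: for each edge `e`, some lift of `e` runs from `σ(s(e))` to
`η(e) • σ(t(e))`. -/
structure IsVoltageRep (c : GCover G Xt X) (o : X.Orientation) (σ : X.V → Xt.V)
    (η : X.Edge → G) : Prop where
  sec : ∀ v, c.vMap (σ v) = v
  lift : ∀ e : X.Edge, ∃ ht : Xt.H, c.hMap ht = o.pick e ∧
    Xt.root ht = σ (X.root (o.pick e)) ∧
    Xt.root (Xt.inv ht) = c.smulV (η e) (σ (X.root (X.inv (o.pick e))))

/-- The component of `v` in `X ∖ F` is nontrivial for the cover twisted by the character
`ρ`: it contains a vertex whose dilation group has nontrivial image under `ρ`, or a closed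
path whose voltage has nontrivial image under `ρ`. -/
def RhoNontrivialAt (c : GCover G Xt X) (o : X.Orientation) (η : X.Edge → G)
    (ρ : G →* ℂ) (F : Finset X.Edge) (v : X.V) : Prop :=
  (∃ u : X.V, X.compRel F v u ∧ ∃ g ∈ c.dilation u, ρ g ≠ 1) ∨
  (∃ l : List X.H, X.IsClosedPath l ∧
    (∀ h ∈ l, X.edgeOf h ∉ F ∧ X.compRel F v (X.root h)) ∧
    ρ (X.pathVoltage o η l) ≠ 1)

/-- Bases of the `ρ`-twisted matroid `M*(X̃/X, ρ)`: maximal subsets `F` such that every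
connected component of `X ∖ F` is `ρ`-nontrivial. -/
def IsBasisRho (c : GCover G Xt X) (o : X.Orientation) (η : X.Edge → G)
    (ρ : G →* ℂ) (F : Finset X.Edge) : Prop :=
  (∀ v : X.V, c.RhoNontrivialAt o η ρ F v) ∧
  ∀ F' : Finset X.Edge, F ⊆ F' → (∀ v : X.V, c.RhoNontrivialAt o η ρ F' v) → F' = F

end GCover

/-- The weight of a connected component with edge set `S`: `|1 - ρ(η(C))|²` where `η(C)` is
the voltage of its unique cycle, if it has one, and `1` otherwise (tree components). -/
noncomputable def cycleWeight {G : Type} [Group G] (X : SerreGraph) (o : X.Orientation)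
    (η : X.Edge → G) (ρ : G →* ℂ) (S : Finset X.Edge) : ℝ := by
  classical exact
  if hc : ∃ l, X.IsEdgeCycle S l then
    ‖(1 : ℂ) - ρ (X.pathVoltage o η hc.choose)‖ ^ 2
  else 1

/-- The weight `w_ρ(F)`: the product of the weights of the connected components of `X ∖ F`. -/
noncomputable def basisWeight {G : Type} [Group G] (X : SerreGraph) (o : X.Orientation)
    (η : X.Edge → G) (ρ : G →* ℂ) (F : Finset X.Edge) : ℝ :=
  ∏ C ∈ X.components F, cycleWeight X o η ρ (X.edgesIn F C)

/-- The weight `w(M*(X̃/X, ρ))` of the `ρ`-twisted matroid: the sum of the weights of its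
bases. -/
noncomputable def GCover.twistedWeight {G : Type} [Group G] [Fintype G] {Xt X : SerreGraph}
    (c : GCover G Xt X) (o : X.Orientation) (η : X.Edge → G) (ρ : G →* ℂ) : ℝ :=
  ∑ F ∈ (Set.toFinite {F : Finset X.Edge | c.IsBasisRho o η ρ F}).toFinset,
    basisWeight X o η ρ F

/-- The weight polynomial `P_{X̃/X,ρ} = ∑_F w_ρ(F) ∏_{e ∈ F} x_e` of the `ρ`-twisted
matroid, summed over its bases. -/
noncomputable def GCover.twistedWeightPoly {G : Type} [Group G] [Fintype G]
    {Xt X : SerreGraph} (c : GCover G Xt X) (o : X.Orientation) (η : X.Edge → G)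
    (ρ : G →* ℂ) : MvPolynomial X.Edge ℝ :=
  ∑ F ∈ (Set.toFinite {F : Finset X.Edge | c.IsBasisRho o η ρ F}).toFinset,
    MvPolynomial.C (basisWeight X o η ρ F) * ∏ e ∈ F, MvPolynomial.X e

end SerreGraph
namespace SerreGraph

/-- One contraction step: `a` and `b` are joined by an edge belonging to `F`. -/
def contractStep (X : SerreGraph) (F : Finset X.Edge) (a b : X.V) : Prop :=
  ∃ h, X.edgeOf h ∈ F ∧ X.root h = a ∧ X.root (X.inv h) = b

/-- Data exhibiting `Xc` as the contraction of `X` along the edge set `F`: the vertices of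
`Xc` are the connected components of the subgraph spanned by `F`, and the half-edges of `Xc`
are the half-edges of `X` not lying on `F`. -/
structure ContractionData (X Xc : SerreGraph) (F : Finset X.Edge) where
  vMap : X.V → Xc.V
  hMap : (h : X.H) → X.edgeOf h ∉ F → Xc.H
  hMap_injective : ∀ h₁ hh₁ h₂ hh₂, hMap h₁ hh₁ = hMap h₂ hh₂ → h₁ = h₂
  hMap_surjective : ∀ k : Xc.H, ∃ h hh, hMap h hh = k
  hMap_inv : ∀ h hh hh', hMap (X.inv h) hh' = Xc.inv (hMap h hh)
  root_hMap : ∀ h hh, Xc.root (hMap h hh) = vMap (X.root h)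
  vMap_surjective : Function.Surjective vMap
  vMap_eq_iff : ∀ u v, vMap u = vMap v ↔ Relation.ReflTransGen (X.contractStep F) u v

/-- The valency of a vertex (loops counted twice). -/
noncomputable def valency (X : SerreGraph) (v : X.V) : ℕ :=
  Nat.card {h : X.H // X.root h = v}

/-- The Laplacian matrix `L = Q - A` of a graph. -/
noncomputable def lapl (X : SerreGraph) : Matrix X.V X.V ℤ :=
  Matrix.of fun u v =>
    (if u = v then (X.valency u : ℤ) else 0) -
      (Nat.card {h : X.H // X.root h = u ∧ X.root (X.inv h) = v} : ℤ)

/-- The Laplacian as a homomorphism on divisors. -/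
noncomputable def laplHom (X : SerreGraph) : (X.V → ℤ) →+ (X.V → ℤ) where
  toFun := fun D u => ∑ v, X.lapl u v * D v
  map_zero' := by funext u; simp
  map_add' := by
    intro a b; funext u
    simp [mul_add, Finset.sum_add_distrib]

/-- Divisors of total degree zero. -/
noncomputable def div0 (X : SerreGraph) : AddSubgroup (X.V → ℤ) where
  carrier := {D | ∑ v, D v = 0}
  add_mem' := by
    intro a b ha hb
    simp only [Set.mem_setOf_eq, Pi.add_apply] at *
    simp [Finset.sum_add_distrib, ha, hb]
  zero_mem' := by simp
  neg_mem' := by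
    intro a ha
    simp only [Set.mem_setOf_eq, Pi.neg_apply] at *
    simp [ha]

/-- The subgroup of principal divisors: the image of the Laplacian. -/
noncomputable def principal (X : SerreGraph) : AddSubgroup (X.V → ℤ) :=
  (laplHom X).range

/-- The Jacobian (critical) group `Jac(X) = Div₀(X) / Im L`. -/
noncomputable def jac (X : SerreGraph) : Type :=
  X.div0 ⧸ ((X.principal).addSubgroupOf X.div0)

noncomputable instance (X : SerreGraph) : AddCommGroup X.jac :=
  inferInstanceAs (AddCommGroup (X.div0 ⧸ ((X.principal).addSubgroupOf X.div0)))

/-- The pushforward of divisors along a graph morphism. -/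
noncomputable def pushforward {Xt X : SerreGraph} (f : Hom Xt X) (D : Xt.V → ℤ) :
    X.V → ℤ :=
  fun v => ∑ w ∈ Finset.univ.filter (fun w => f.vMap w = v), D w

/-- The diagonal valency matrix `Q` (over `ℂ`). -/
noncomputable def qMatrix (X : SerreGraph) : Matrix X.V X.V ℂ :=
  Matrix.of fun u v => if u = v then (X.valency u : ℂ) else 0

/-- The `ρ`-twisted adjacency matrix `A_ρ`. -/
noncomputable def twistedAdj {G : Type} [Group G] (X : SerreGraph) (o : X.Orientation)
    (η : X.Edge → G) (ρ : G →* ℂ) : Matrix X.V X.V ℂ :=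
  Matrix.of fun u v =>
    (∑ e ∈ Finset.univ.filter
        (fun e => X.root (o.pick e) = u ∧ X.root (X.inv (o.pick e)) = v), ρ (η e)) +
    (∑ e ∈ Finset.univ.filter
        (fun e => X.root (o.pick e) = v ∧ X.root (X.inv (o.pick e)) = u),
          (starRingEnd ℂ) (ρ (η e)))

/-- The `ρ`-twisted Laplacian `L_ρ = Q - A_ρ`. -/
noncomputable def twistedLapl {G : Type} [Group G] (X : SerreGraph) (o : X.Orientation)
    (η : X.Edge → G) (ρ : G →* ℂ) : Matrix X.V X.V ℂ :=
  X.qMatrix - X.twistedAdj o η ρ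

/-- The reciprocal `ζ_M(s, x_e, X)⁻¹ = det(I - W)` of the metric zeta function, where `W`
is the edge matrix with entries `s^{x_e}` (two-term determinant formula). -/
noncomputable def zetaMInv (X : SerreGraph) (x : X.Edge → ℝ) (s : ℝ) : ℝ :=
  Matrix.det ((1 : Matrix X.H X.H ℝ) - Matrix.of fun a b : X.H =>
    if X.root (X.inv a) = X.root b ∧ b ≠ X.inv a then s ^ (x (X.edgeOf a)) else 0)

/-- The reciprocal of the Ihara zeta function: the metric zeta with all lengths one. -/
noncomputable def zetaInv (X : SerreGraph) (s : ℝ) : ℝ :=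
  X.zetaMInv (fun _ => 1) s

/-- The reciprocal `L_M(s, x_e, X̃/X, ρ)⁻¹ = det(I - W_ρ)` of the metric Artin `L`-function
of the cover defined by the voltage assignment `η` (two-term determinant formula). -/
noncomputable def LMInv {G : Type} [Group G] (X : SerreGraph) (o : X.Orientation)
    (η : X.Edge → G) (ρ : G →* ℂ) (x : X.Edge → ℝ) (s : ℝ) : ℂ :=
  Matrix.det ((1 : Matrix X.H X.H ℂ) - Matrix.of fun a b : X.H =>
    if X.root (X.inv a) = X.root b ∧ b ≠ X.inv a then
      ρ (X.halfVoltage o η a) * ((s ^ (x (X.edgeOf a)) : ℝ) : ℂ)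
    else 0)

/-- The weight polynomial of a free cover defined by the voltage assignment `η`, twisted by
`ρ`: the sum over all `(g-1)`-element edge sets `F` all of whose complementary components
have genus one of `∏ᵢ |1 - ρ(η(Xᵢ))|² ∏_{e ∈ F} x_e`. -/
noncomputable def freeWeightPoly {G : Type} [Group G] (X : SerreGraph)
    (o : X.Orientation) (η : X.Edge → G) (ρ : G →* ℂ) : MvPolynomial X.Edge ℝ :=
  ∑ F ∈ (Set.toFinite {F : Finset X.Edge |
      F.card + Fintype.card X.V = Fintype.card X.Edge ∧
      ∀ C ∈ X.components F, (X.edgesIn F C).card = C.card}).toFinset,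
    MvPolynomial.C (basisWeight X o η ρ F) * ∏ e ∈ F, MvPolynomial.X e

/-- The `j`-th vertex on the chain subdividing the edge `e` into `n e` parts. -/
noncomputable def subVertex (X : SerreGraph) (o : X.Orientation) (n : X.Edge → ℕ)
    (e : X.Edge) (j : ℕ) : X.V ⊕ ((e : X.Edge) × Fin (n e - 1)) :=
  if _h0 : j = 0 then Sum.inl (X.root (o.pick e))
  else if h : j < n e then Sum.inr ⟨e, ⟨j - 1, by omega⟩⟩
  else Sum.inl (X.root (X.inv (o.pick e)))

/-- The graph obtained from `X` by replacing each edge `e` by a chain of `n e` edges. -/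
noncomputable def subdivide (X : SerreGraph) (o : X.Orientation) (n : X.Edge → ℕ) :
    SerreGraph where
  V := X.V ⊕ ((e : X.Edge) × Fin (n e - 1))
  H := (e : X.Edge) × (Fin (n e) × Bool)
  fintypeV := inferInstance
  fintypeH := inferInstance
  decEqV := Classical.decEq _
  decEqH := Classical.decEq _
  inv := fun p => ⟨p.1, (p.2.1, !p.2.2)⟩
  inv_inv := by rintro ⟨e, i, b⟩; simp
  inv_ne := by rintro ⟨e, i, b⟩ hcon; simp at hcon
  root := fun p => X.subVertex o n p.1 (if p.2.2 then (p.2.1 : ℕ) + 1 else (p.2.1 : ℕ))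

end SerreGraph

/-- The cycle graph with `k` vertices, every pair of cyclically adjacent vertices joined by
`M` parallel edges. -/
def cycleGraph (k M : ℕ) : SerreGraph where
  V := Fin k
  H := Fin k × Fin M × Bool
  fintypeV := inferInstance
  fintypeH := inferInstance
  decEqV := inferInstance
  decEqH := inferInstance
  inv := fun p => (p.1, p.2.1, !p.2.2)
  inv_inv := by rintro ⟨i, j, b⟩; simp
  inv_ne := by rintro ⟨i, j, b⟩ hcon; simp at hcon
  root := fun p => if p.2.2 then finRotate k p.1 else p.1

namespace SerreGraph

/-! ### Components and genus after deleting edges -/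

section Graph

variable {X : SerreGraph} {F F' : Finset X.Edge} {u v w : X.V} {h k : X.H}

lemma edgeOf_eq (hk : X.edgeOf k = X.edgeOf h) : k = h ∨ k = X.inv h := by
  have key : Relation.EqvGen (fun h h' : X.H => h' = X.inv h) k h := Quot.eqvGen_exact hk
  induction key with
  | rel a b hab => right; rw [hab, X.inv_inv]
  | refl a => exact Or.inl rfl
  | symm a b _ ih =>
    rcases ih (by assumption : X.edgeOf b = X.edgeOf a).symm with rfl | rfl
    · exact Or.inl rfl
    · right; rw [X.inv_inv]
  | trans a b d hab hbd ih1 ih2 =>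
    have e1 : X.edgeOf a = X.edgeOf b := Quot.eqvGen_sound hab
    have e2 : X.edgeOf b = X.edgeOf d := Quot.eqvGen_sound hbd
    rcases ih1 e1 with rfl | rfl <;> rcases ih2 e2 with rfl | rfl
    · exact Or.inl rfl
    · exact Or.inr rfl
    · exact Or.inr rfl
    · left; rw [X.inv_inv]

lemma compRel_step (hh : X.edgeOf h ∉ F) : X.compRel F (X.root h) (X.root (X.inv h)) :=
  Relation.ReflTransGen.single ⟨h, rfl, rfl, hh⟩

lemma compRel_refl (F : Finset X.Edge) (v : X.V) : X.compRel F v v :=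
  Relation.ReflTransGen.refl

lemma compRel_trans (h1 : X.compRel F u v) (h2 : X.compRel F v w) : X.compRel F u w :=
  Relation.ReflTransGen.trans h1 h2

lemma compRel_symm (huv : X.compRel F u v) : X.compRel F v u := by
  have hs : Std.Symm (X.adjStep F) := ⟨by
    rintro a b ⟨h, rfl, rfl, hh⟩
    exact ⟨X.inv h, rfl, by rw [X.inv_inv], by rwa [X.edgeOf_inv]⟩⟩
  exact Relation.ReflTransGen.stdSymm.symm _ _ huv

lemma compRel_anti (hF : F ⊆ F') (huv : X.compRel F' u v) : X.compRel F u v := by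
  refine Relation.ReflTransGen.mono ?_ _ _ huv
  rintro a b ⟨h, rfl, rfl, hh⟩
  exact ⟨h, rfl, rfl, fun hm => hh (hF hm)⟩

lemma compRel_of_insert (huv : X.compRel (insert (X.edgeOf h) F) u v) : X.compRel F u v :=
  compRel_anti (Finset.subset_insert _ _) huv

/-- Deleting one more edge: a walk either survives or can be cut at its passages through the
deleted edge, leaving an initial and a final segment that avoid it. -/
lemma compRel_delete (h : X.H) (huv : X.compRel F u v) :
    X.compRel (insert (X.edgeOf h) F) u v ∨
    (X.compRel (insert (X.edgeOf h) F) u (X.root h) ∧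
      X.compRel (insert (X.edgeOf h) F) (X.root (X.inv h)) v) ∨
    (X.compRel (insert (X.edgeOf h) F) u (X.root (X.inv h)) ∧
      X.compRel (insert (X.edgeOf h) F) (X.root h) v) := by
  induction huv with
  | refl => exact Or.inl (compRel_refl _ _)
  | tail _ hs ih =>
    obtain ⟨k, rfl, rfl, hk⟩ := hs
    by_cases hkh : X.edgeOf k = X.edgeOf h
    · rcases edgeOf_eq hkh with rfl | rfl
      · rcases ih with ih | ih | ih
        · exact Or.inr (Or.inl ⟨ih, compRel_refl _ _⟩)
        · exact Or.inr (Or.inl ⟨ih.1, compRel_refl _ _⟩)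
        · exact Or.inl ih.1
      · rw [X.inv_inv]
        rcases ih with ih | ih | ih
        · exact Or.inr (Or.inr ⟨ih, compRel_refl _ _⟩)
        · exact Or.inl ih.1
        · exact Or.inr (Or.inr ⟨ih.1, compRel_refl _ _⟩)
    · have hst : X.compRel (insert (X.edgeOf h) F) (X.root k) (X.root (X.inv k)) :=
        compRel_step (by simp [hkh, hk])
      rcases ih with ih | ih | ih
      · exact Or.inl (compRel_trans ih hst)
      · exact Or.inr (Or.inl ⟨ih.1, compRel_trans ih.2 hst⟩)
      · exact Or.inr (Or.inr ⟨ih.1, compRel_trans ih.2 hst⟩)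

/-- Deleting an edge that is not a bridge does not change connectivity. -/
lemma compRel_insert_of_nonbridge
    (hb : X.compRel (insert (X.edgeOf h) F) (X.root h) (X.root (X.inv h)))
    (huv : X.compRel F u v) : X.compRel (insert (X.edgeOf h) F) u v := by
  rcases compRel_delete h huv with h1 | h1 | h1
  · exact h1
  · exact compRel_trans h1.1 (compRel_trans hb h1.2)
  · exact compRel_trans h1.1 (compRel_trans (compRel_symm hb) h1.2)

lemma compRel_insert_or (hv : X.compRel F (X.root h) v) :
    X.compRel (insert (X.edgeOf h) F) (X.root h) v ∨
    X.compRel (insert (X.edgeOf h) F) (X.root (X.inv h)) v := by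
  rcases compRel_delete h hv with h1 | h1 | h1
  · exact Or.inl h1
  · exact Or.inr h1.2
  · exact Or.inl h1.2

lemma card_compl_insert_lt {e : X.Edge} (he : e ∉ F) : (insert e F)ᶜ.card < Fᶜ.card := by
  refine Finset.card_lt_card ⟨?_, ?_⟩
  · intro x; simp
  · intro hsub
    have := hsub (Finset.mem_compl.2 he)
    simp at this

/-- The last departure from `u` of a walk from `u` to `v ≠ u` uses an edge that is not needed
afterwards. -/
lemma exists_departure (huv : X.compRel F u v) (hne : u ≠ v) :
    ∃ h, X.root h = u ∧ X.edgeOf h ∉ F ∧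
      X.compRel (insert (X.edgeOf h) F) (X.root (X.inv h)) v := by
  induction hn : Fᶜ.card using Nat.strong_induction_on generalizing F with
  | _ n ih =>
    rcases Relation.ReflTransGen.cases_head huv with h0 | ⟨w, ⟨h, rfl, rfl, hh⟩, hw⟩
    · exact absurd h0 hne
    · have hrec : X.compRel (insert (X.edgeOf h) F) (X.root h) v →
          ∃ k, X.root k = X.root h ∧ X.edgeOf k ∉ F ∧
            X.compRel (insert (X.edgeOf k) F) (X.root (X.inv k)) v := by
        intro hv
        obtain ⟨k, hk1, hk2, hk3⟩ := ih _ (hn ▸ card_compl_insert_lt hh) hv rfl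
        exact ⟨k, hk1, fun hm => hk2 (Finset.mem_insert_of_mem hm),
          compRel_anti (Finset.insert_subset_insert _ (Finset.subset_insert _ _)) hk3⟩
      rcases compRel_delete h hw with h1 | h1 | h1
      · exact ⟨h, rfl, hh, h1⟩
      · exact ⟨h, rfl, hh, h1.2⟩
      · exact hrec h1.2

/-- Connected vertices are joined by a trail. The head-to-tail conditions are phrased for a trail
preceded by a half-edge `h` ending at `u` and followed by a half-edge `k` starting at `v`. -/
lemma exists_trail (huv : X.compRel F (X.root (X.inv h)) (X.root k)) :
    ∃ t : List X.H, (∀ x ∈ t, X.edgeOf x ∉ F) ∧ (t.map X.edgeOf).Nodup ∧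
      List.IsChain (fun a b => X.root (X.inv a) = X.root b) (h :: (t ++ [k])) := by
  induction hn : Fᶜ.card using Nat.strong_induction_on generalizing F h with
  | _ n ih =>
    by_cases hne : X.root (X.inv h) = X.root k
    · exact ⟨[], by simp, by simp, by simpa using hne⟩
    · obtain ⟨a, ha1, ha2, ha3⟩ := exists_departure huv hne
      obtain ⟨t, ht1, ht2, ht3⟩ := ih _ (hn ▸ card_compl_insert_lt ha2) ha3 rfl
      refine ⟨a :: t, ?_, ?_, ?_⟩
      · rintro x (_ | ⟨_, hx⟩)
        · exact ha2
        · exact fun hm => ht1 x hx (Finset.mem_insert_of_mem hm)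
      · rw [List.map_cons, List.nodup_cons]
        refine ⟨fun hm => ?_, ht2⟩
        obtain ⟨x, hx, hxe⟩ := List.mem_map.1 hm
        exact ht1 x hx (by rw [hxe]; exact Finset.mem_insert_self _ _)
      · exact List.isChain_cons_cons.2 ⟨ha1.symm, ht3⟩

lemma mem_compVerts : u ∈ X.compVerts F v ↔ X.compRel F v u := by
  simp [compVerts]

lemma mem_edgesIn_compVerts :
    X.edgeOf h ∈ X.edgesIn F (X.compVerts F v) ↔ X.edgeOf h ∉ F ∧ X.compRel F v (X.root h) := by
  simp only [edgesIn, Set.Finite.mem_toFinset, Set.mem_ofPred_eq, mem_compVerts]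
  constructor
  · rintro ⟨hF, k, hk, hv⟩
    refine ⟨hF, ?_⟩
    rcases edgeOf_eq hk with rfl | rfl
    · exact hv
    · exact compRel_trans hv (compRel_symm (compRel_step hF))
  · rintro ⟨hF, hv⟩
    exact ⟨hF, h, rfl, hv⟩

lemma compVerts_congr (huv : X.compRel F u v) : X.compVerts F u = X.compVerts F v := by
  ext w
  simp only [mem_compVerts]
  exact ⟨compRel_trans (compRel_symm huv), compRel_trans huv⟩

/-- The first Betti number (genus) `|E| + 1 - |V|` of the component of `v` in `X ∖ F`, as an
integer. -/
noncomputable def chi (X : SerreGraph) (F : Finset X.Edge) (v : X.V) : ℤ :=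
  ((X.edgesIn F (X.compVerts F v)).card : ℤ) + 1 - (X.compVerts F v).card

lemma chi_congr (huv : X.compRel F u v) : X.chi F u = X.chi F v := by
  rw [chi, chi, compVerts_congr huv]

lemma chi_nonbridge (hh : X.edgeOf h ∉ F) (hv : X.compRel F v (X.root h))
    (hb : X.compRel (insert (X.edgeOf h) F) (X.root h) (X.root (X.inv h))) :
    X.chi F v = X.chi (insert (X.edgeOf h) F) v + 1 := by
  have hV : X.compVerts (insert (X.edgeOf h) F) v = X.compVerts F v := by
    ext w
    simp only [mem_compVerts]
    exact ⟨compRel_of_insert, compRel_insert_of_nonbridge hb⟩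
  have hE : X.edgesIn F (X.compVerts F v) = insert (X.edgeOf h)
      (X.edgesIn (insert (X.edgeOf h) F) (X.compVerts (insert (X.edgeOf h) F) v)) := by
    ext e
    obtain ⟨k, rfl⟩ := X.edgeOf_surjective e
    rw [Finset.mem_insert, mem_edgesIn_compVerts, mem_edgesIn_compVerts]
    by_cases hkh : X.edgeOf k = X.edgeOf h
    · simp only [hkh, true_or, iff_true]
      refine ⟨hh, ?_⟩
      rcases edgeOf_eq hkh with rfl | rfl
      · exact hv
      · exact compRel_trans hv (compRel_step hh)
    · simp only [hkh, false_or, Finset.mem_insert]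
      exact and_congr_right fun _ => ⟨compRel_insert_of_nonbridge hb, compRel_of_insert⟩
  rw [chi, chi, hE, Finset.card_insert_of_notMem, hV]
  · push_cast; ring
  · rw [mem_edgesIn_compVerts]; simp

lemma chi_bridge (hh : X.edgeOf h ∉ F)
    (hb : ¬ X.compRel (insert (X.edgeOf h) F) (X.root h) (X.root (X.inv h))) :
    X.chi F (X.root h) = X.chi (insert (X.edgeOf h) F) (X.root h) +
      X.chi (insert (X.edgeOf h) F) (X.root (X.inv h)) := by
  set F' := insert (X.edgeOf h) F with hF'
  have hV : X.compVerts F (X.root h) =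
      X.compVerts F' (X.root h) ∪ X.compVerts F' (X.root (X.inv h)) := by
    ext w
    simp only [mem_compVerts, Finset.mem_union]
    refine ⟨compRel_insert_or, ?_⟩
    rintro (h1 | h1)
    · exact compRel_of_insert h1
    · exact compRel_trans (compRel_step hh) (compRel_of_insert h1)
  have hE : X.edgesIn F (X.compVerts F (X.root h)) = insert (X.edgeOf h)
      (X.edgesIn F' (X.compVerts F' (X.root h)) ∪
        X.edgesIn F' (X.compVerts F' (X.root (X.inv h)))) := by
    ext e
    obtain ⟨k, rfl⟩ := X.edgeOf_surjective e
    rw [Finset.mem_insert, Finset.mem_union, mem_edgesIn_compVerts, mem_edgesIn_compVerts,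
      mem_edgesIn_compVerts]
    by_cases hkh : X.edgeOf k = X.edgeOf h
    · simp only [hkh, true_or, iff_true]
      refine ⟨hh, ?_⟩
      rcases edgeOf_eq hkh with rfl | rfl
      · exact compRel_refl _ _
      · exact compRel_step hh
    · have hkF : X.edgeOf k ∉ F' ↔ X.edgeOf k ∉ F := by simp [hF', hkh]
      simp only [hkh, false_or, hkF, ← and_or_left]
      refine and_congr_right fun _ => ⟨compRel_insert_or, ?_⟩
      rintro (h1 | h1)
      · exact compRel_of_insert h1
      · exact compRel_trans (compRel_step hh) (compRel_of_insert h1)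
  have dV : Disjoint (X.compVerts F' (X.root h)) (X.compVerts F' (X.root (X.inv h))) := by
    rw [Finset.disjoint_left]
    intro w h1 h2
    rw [mem_compVerts] at h1 h2
    exact hb (compRel_trans h1 (compRel_symm h2))
  have dE : Disjoint (X.edgesIn F' (X.compVerts F' (X.root h)))
      (X.edgesIn F' (X.compVerts F' (X.root (X.inv h)))) := by
    rw [Finset.disjoint_left]
    intro e h1 h2
    obtain ⟨k, rfl⟩ := X.edgeOf_surjective e
    rw [mem_edgesIn_compVerts] at h1 h2
    exact hb (compRel_trans h1.2 (compRel_symm h2.2))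
  have hnot : X.edgeOf h ∉ X.edgesIn F' (X.compVerts F' (X.root h)) ∪
      X.edgesIn F' (X.compVerts F' (X.root (X.inv h))) := by
    rw [Finset.mem_union, mem_edgesIn_compVerts, mem_edgesIn_compVerts]
    simp [hF']
  rw [chi, chi, chi, hE, Finset.card_insert_of_notMem hnot, hV,
    Finset.card_union_of_disjoint dV, Finset.card_union_of_disjoint dE]
  push_cast; ring

lemma chi_isolated (hv : ∀ h, X.edgeOf h ∉ F → ¬ X.compRel F v (X.root h)) : X.chi F v = 0 := by
  have hV : X.compVerts F v = {v} := by
    ext w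
    rw [mem_compVerts, Finset.mem_singleton]
    refine ⟨fun hw => ?_, fun hw => hw ▸ compRel_refl _ _⟩
    rcases Relation.ReflTransGen.cases_head hw with rfl | ⟨_, ⟨h, h1, _, h3⟩, _⟩
    · rfl
    · exact absurd (h1 ▸ compRel_refl _ _) (hv h h3)
  have hE : X.edgesIn F (X.compVerts F v) = ∅ := by
    rw [Finset.eq_empty_iff_forall_notMem]
    intro e
    obtain ⟨k, rfl⟩ := X.edgeOf_surjective e
    rw [mem_edgesIn_compVerts]
    exact fun hk => hv k hk.1 hk.2
  rw [chi, hE, hV]; simp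

lemma chi_nonneg (F : Finset X.Edge) (v : X.V) : 0 ≤ X.chi F v := by
  induction hn : Fᶜ.card using Nat.strong_induction_on generalizing F v with
  | _ n ih =>
    by_cases hex : ∃ h, X.edgeOf h ∉ F ∧ X.compRel F v (X.root h)
    · obtain ⟨h, hh, hv⟩ := hex
      have hlt := hn ▸ card_compl_insert_lt hh
      by_cases hb : X.compRel (insert (X.edgeOf h) F) (X.root h) (X.root (X.inv h))
      · have := ih _ hlt _ v rfl
        rw [chi_nonbridge hh hv hb]; omega
      · have h1 := ih _ hlt _ (X.root h) rfl
        have h2 := ih _ hlt _ (X.root (X.inv h)) rfl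
        rw [chi_congr hv, chi_bridge hh hb]; omega
    · rw [chi_isolated]
      intro h h1 h2
      exact hex ⟨h, h1, h2⟩

/-- Every edge of the component of `v` in `X ∖ F` is a bridge, i.e. that component is a tree. -/
def AllBridges (X : SerreGraph) (F : Finset X.Edge) (v : X.V) : Prop :=
  ∀ h, X.edgeOf h ∉ F → X.compRel F v (X.root h) →
    ¬ X.compRel (insert (X.edgeOf h) F) (X.root h) (X.root (X.inv h))

lemma AllBridges.insert (hB : X.AllBridges F v) (hu : X.compRel F v u) :
    X.AllBridges (insert (X.edgeOf h) F) u := by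
  intro k hk hv hc
  refine hB k (fun hm => hk (Finset.mem_insert_of_mem hm))
    (compRel_trans hu (compRel_of_insert hv)) ?_
  exact compRel_anti (Finset.insert_subset_insert _ (Finset.subset_insert _ _)) hc

lemma AllBridges.chi_eq_zero (hB : X.AllBridges F v) : X.chi F v = 0 := by
  induction hn : Fᶜ.card using Nat.strong_induction_on generalizing F v with
  | _ n ih =>
    by_cases hex : ∃ h, X.edgeOf h ∉ F ∧ X.compRel F v (X.root h)
    · obtain ⟨h, hh, hv⟩ := hex
      have hlt := hn ▸ card_compl_insert_lt hh
      rw [chi_congr hv, chi_bridge hh (hB h hh hv), ih _ hlt (hB.insert hv) rfl,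
        ih _ hlt (hB.insert (compRel_trans hv (compRel_step hh))) rfl, add_zero]
    · exact chi_isolated fun h h1 h2 => hex ⟨h, h1, h2⟩

lemma allBridges_of_chi (h0 : X.chi F v = 0) : X.AllBridges F v := by
  intro h hh hv hb
  have := chi_nonneg (insert (X.edgeOf h) F) v
  rw [chi_nonbridge hh hv hb] at h0
  omega

end Graph

/-! ### Potentials for voltage assignments -/

section Cover

variable {G : Type} [CommGroup G] {X : SerreGraph} {F F' : Finset X.Edge} {u v w : X.V}
  {h k : X.H} {o : X.Orientation} {η : X.Edge → G} {φ : X.V → G}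

lemma halfVoltage_inv (o : X.Orientation) (η : X.Edge → G) (h : X.H) :
    X.halfVoltage o η (X.inv h) = (X.halfVoltage o η h)⁻¹ := by
  have hp := o.pick_spec (X.edgeOf h)
  unfold halfVoltage
  rw [X.edgeOf_inv]
  rcases edgeOf_eq hp with h1 | h1
  · rw [h1, if_neg (X.inv_ne h), if_pos rfl]
  · rw [h1, if_pos rfl, if_neg (X.inv_ne h).symm, _root_.inv_inv]

/-- `φ` is a potential for the voltages on the component of `v` in `X ∖ F`: the voltage of each
half-edge of that component is the increment of `φ` along it. -/
def IsPot (o : X.Orientation) (η : X.Edge → G) (F : Finset X.Edge) (v : X.V) (φ : X.V → G) :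
    Prop :=
  ∀ h, X.edgeOf h ∉ F → X.compRel F v (X.root h) →
    X.halfVoltage o η h = (φ (X.root h))⁻¹ * φ (X.root (X.inv h))

lemma IsPot.congr (hφ : IsPot o η F v φ) (hu : X.compRel F v u) : IsPot o η F u φ :=
  fun h hh hr => hφ h hh (compRel_trans hu hr)

lemma IsPot.anti (hφ : IsPot o η F v φ) (hF : F ⊆ F') : IsPot o η F' v φ :=
  fun h hh hr => hφ h (fun hm => hh (hF hm)) (compRel_anti hF hr)

/-- A potential on the component left after deleting a non-bridge extends across the deleted edge
as soon as it gives that edge the correct increment. -/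
lemma IsPot.of_insert (hφ : IsPot o η (insert (X.edgeOf h) F) v φ)
    (hb : X.compRel (insert (X.edgeOf h) F) (X.root h) (X.root (X.inv h)))
    (he : X.halfVoltage o η h = (φ (X.root h))⁻¹ * φ (X.root (X.inv h))) :
    IsPot o η F v φ := by
  intro k hk hr
  by_cases hkh : X.edgeOf k = X.edgeOf h
  · rcases edgeOf_eq hkh with rfl | rfl
    · exact he
    · rw [halfVoltage_inv, he, X.inv_inv]; group
  · exact hφ k (by simp [hkh, hk]) (compRel_insert_of_nonbridge hb hr)

/-- Potentials on the two sides of a bridge glue, after a shift of one of them. -/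
lemma IsPot.glue {φ₁ φ₂ : X.V → G}
    (hb : ¬ X.compRel (insert (X.edgeOf h) F) (X.root h) (X.root (X.inv h)))
    (h1 : IsPot o η (insert (X.edgeOf h) F) (X.root h) φ₁)
    (h2 : IsPot o η (insert (X.edgeOf h) F) (X.root (X.inv h)) φ₂) :
    ∃ φ, IsPot o η F (X.root h) φ := by
  classical
  set F' := insert (X.edgeOf h) F with hF'
  set x := φ₁ (X.root h) * X.halfVoltage o η h * (φ₂ (X.root (X.inv h)))⁻¹ with hx
  set φ : X.V → G := fun u => if X.compRel F' (X.root h) u then φ₁ u else x * φ₂ u with hφ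
  have hs : φ (X.root h) = φ₁ (X.root h) := if_pos (compRel_refl _ _)
  have ht : φ (X.root (X.inv h)) = x * φ₂ (X.root (X.inv h)) := if_neg hb
  have he : X.halfVoltage o η h = (φ (X.root h))⁻¹ * φ (X.root (X.inv h)) := by
    rw [hs, ht, hx]; group
  refine ⟨φ, fun k hk hr => ?_⟩
  by_cases hkh : X.edgeOf k = X.edgeOf h
  · rcases edgeOf_eq hkh with rfl | rfl
    · exact he
    · rw [halfVoltage_inv, he, X.inv_inv]; group
  · have hkF : X.edgeOf k ∉ F' := by simp [hF', hkh, hk]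
    have hst := compRel_step hkF
    by_cases hc : X.compRel F' (X.root h) (X.root k)
    · have e1 : φ (X.root k) = φ₁ (X.root k) := if_pos hc
      have e2 : φ (X.root (X.inv k)) = φ₁ (X.root (X.inv k)) := if_pos (compRel_trans hc hst)
      rw [e1, e2, h1 k hkF hc]
    · have hc' : ¬ X.compRel F' (X.root h) (X.root (X.inv k)) :=
        fun hm => hc (compRel_trans hm (compRel_symm hst))
      have e1 : φ (X.root k) = x * φ₂ (X.root k) := if_neg hc
      have e2 : φ (X.root (X.inv k)) = x * φ₂ (X.root (X.inv k)) := if_neg hc'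
      rw [e1, e2, h2 k hkF ((compRel_insert_or hr).resolve_left hc)]
      group

/-- Voltages on a tree always come from a potential. -/
lemma AllBridges.exists_pot (o : X.Orientation) (η : X.Edge → G) (hB : X.AllBridges F v) :
    ∃ φ, IsPot o η F v φ := by
  induction hn : Fᶜ.card using Nat.strong_induction_on generalizing F v with
  | _ n ih =>
    by_cases hex : ∃ h, X.edgeOf h ∉ F ∧ X.compRel F v (X.root h)
    · obtain ⟨h, hh, hv⟩ := hex
      have hlt := hn ▸ card_compl_insert_lt hh
      obtain ⟨φ₁, h1⟩ := ih _ hlt (hB.insert hv) rfl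
      obtain ⟨φ₂, h2⟩ := ih _ hlt (hB.insert (compRel_trans hv (compRel_step hh))) rfl
      obtain ⟨φ, hφ⟩ := IsPot.glue (hB h hh hv) h1 h2
      exact ⟨φ, hφ.congr (compRel_symm hv)⟩
    · exact ⟨fun _ => 1, fun h h1 h2 => absurd ⟨h, h1, h2⟩ hex⟩

/-- Two potentials on the same component differ by a constant. -/
lemma IsPot.ratio {ψ : X.V → G} (hφ : IsPot o η F v φ) (hψ : IsPot o η F v ψ)
    (hu : X.compRel F v u) : ψ u * (φ u)⁻¹ = ψ v * (φ v)⁻¹ := by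
  induction hu with
  | refl => rfl
  | tail hr hs ih =>
    obtain ⟨k, rfl, rfl, hk⟩ := hs
    rw [← ih]
    have e := (hφ k hk hr).symm.trans (hψ k hk hr)
    have e1 : φ (X.root (X.inv k)) =
        φ (X.root k) * ((ψ (X.root k))⁻¹ * ψ (X.root (X.inv k))) := by
      rw [← e]; group
    rw [e1]
    simp only [mul_inv, _root_.inv_inv]
    calc _ = (ψ (X.root (X.inv k)) * (ψ (X.root (X.inv k)))⁻¹) *
          (ψ (X.root k) * (φ (X.root k))⁻¹) := by ac_rfl
      _ = _ := by rw [mul_inv_cancel, one_mul]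

lemma pathVoltage_cons (h : X.H) (t : List X.H) :
    X.pathVoltage o η (h :: t) = X.halfVoltage o η h * X.pathVoltage o η t := by
  simp [pathVoltage]

lemma compRel_of_trail (t : List X.H) (ht : ∀ x ∈ t, X.edgeOf x ∉ F)
    (hc : List.IsChain (fun a b => X.root (X.inv a) = X.root b) (h :: (t ++ [k]))) :
    X.compRel F (X.root (X.inv h)) (X.root k) := by
  induction t generalizing h with
  | nil =>
    have hk : X.root (X.inv h) = X.root k := by simpa using hc
    rw [hk]
    exact compRel_refl _ _
  | cons a t ih =>
    obtain ⟨ha, hc'⟩ := List.isChain_cons_cons.1 hc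
    rw [ha]
    exact compRel_trans (compRel_step (ht a (by simp))) (ih (fun x hx => ht x (by simp [hx])) hc')

/-- The voltage of a walk is the increment of the potential between its end points. The walk `t`
is preceded by a half-edge `h` and followed by a half-edge `k`. -/
lemma IsPot.prod_trail (hφ : IsPot o η F v φ) (t : List X.H) (ht : ∀ x ∈ t, X.edgeOf x ∉ F)
    (hv : X.compRel F v (X.root (X.inv h)))
    (hc : List.IsChain (fun a b => X.root (X.inv a) = X.root b) (h :: (t ++ [k]))) :
    X.pathVoltage o η t = (φ (X.root (X.inv h)))⁻¹ * φ (X.root k) := by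
  induction t generalizing h with
  | nil =>
    have hk : X.root (X.inv h) = X.root k := by simpa using hc
    rw [hk]
    simp [pathVoltage]
  | cons a t ih =>
    obtain ⟨ha, hc'⟩ := List.isChain_cons_cons.1 hc
    have haF := ht a (by simp)
    rw [ha] at hv ⊢
    rw [pathVoltage_cons, ih (fun x hx => ht x (by simp [hx]))
      (compRel_trans hv (compRel_step haF)) hc', hφ a haF hv]
    group

/-- On a component where the voltages come from a potential, closed paths have trivial voltage. -/
lemma IsPot.closed (hφ : IsPot o η F v φ) (t : List X.H) (ht : ∀ x ∈ t, X.edgeOf x ∉ F)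
    (hh : X.edgeOf h ∉ F) (hv : X.compRel F v (X.root h))
    (hc : List.IsChain (fun a b => X.root (X.inv a) = X.root b) (h :: (t ++ [h]))) :
    X.pathVoltage o η (h :: t) = 1 := by
  rw [pathVoltage_cons, hφ.prod_trail t ht (compRel_trans hv (compRel_step hh)) hc, hφ h hh hv]
  group

end Cover

/-! ### Trivial components of the cover -/

section Trivial

variable {G : Type} [CommGroup G] [Fintype G] {X Xt : SerreGraph} {c : GCover G Xt X}
  {F F' : Finset X.Edge} {u v w : X.V}
  {h k : X.H} {o : X.Orientation} {η : X.Edge → G} {σ : X.V → Xt.V} {φ : X.V → G}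

lemma mem_dilation (hrep : c.IsVoltageRep o σ η) {g : G} (hg : c.smulV g (σ u) = σ u) :
    g ∈ c.dilation u := by
  intro w hw
  obtain ⟨a, rfl⟩ := c.vertex_trans (σ u) w (by rw [hrep.sec, hw])
  rw [← c.mul_smulV, mul_comm, c.mul_smulV, hg]

lemma eq_of_smul_eq (hrep : c.IsVoltageRep o σ η) (hu : c.dilation u = {1}) {a b : G}
    (hab : c.smulV a (σ u) = c.smulV b (σ u)) : a = b := by
  have : b⁻¹ * a ∈ c.dilation u := by
    apply mem_dilation hrep
    rw [c.mul_smulV, hab, ← c.mul_smulV, inv_mul_cancel, c.one_smulV]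
  rw [hu, Set.mem_singleton_iff] at this
  exact (inv_mul_eq_one.1 this).symm

lemma one_mem_dilation : (1 : G) ∈ c.dilation u := fun w _ => c.one_smulV w

lemma exists_lift (hrep : c.IsVoltageRep o σ η) (h : X.H) (g : G) :
    ∃ ht : Xt.H, c.hMap ht = h ∧ Xt.root ht = c.smulV g (σ (X.root h)) ∧
      Xt.root (Xt.inv ht) = c.smulV (g * X.halfVoltage o η h) (σ (X.root (X.inv h))) := by
  have hp := o.pick_spec (X.edgeOf h)
  obtain ⟨ht, h1, h2, h3⟩ := hrep.lift (X.edgeOf h)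
  rcases edgeOf_eq hp with he | he
  · refine ⟨c.smulH g ht, ?_, ?_, ?_⟩
    · rw [c.hMap_smulH, h1, he]
    · rw [c.root_smulH, h2, he]
    · rw [← c.smulH_inv, c.root_smulH, h3, he, ← c.mul_smulV, halfVoltage, if_pos he.symm]
  · refine ⟨c.smulH (g * (η (X.edgeOf h))⁻¹) (Xt.inv ht), ?_, ?_, ?_⟩
    · rw [c.hMap_smulH, c.hMap_inv, h1, he, X.inv_inv]
    · rw [c.root_smulH, h3, he, ← c.mul_smulV, X.inv_inv, inv_mul_cancel_right]
    · rw [← c.smulH_inv, Xt.inv_inv, c.root_smulH, h2, he, halfVoltage, if_neg]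
      rw [he]; exact (X.inv_ne h).symm

lemma lift_form (hrep : c.IsVoltageRep o σ η) (ht : Xt.H) :
    ∃ g : G, Xt.root ht = c.smulV g (σ (X.root (c.hMap ht))) ∧
      Xt.root (Xt.inv ht) = c.smulV (g * X.halfVoltage o η (c.hMap ht))
        (σ (X.root (X.inv (c.hMap ht)))) := by
  obtain ⟨k, h1, h2, h3⟩ := exists_lift hrep (c.hMap ht) 1
  obtain ⟨g, hg | hg⟩ := c.edge_trans k ht (Or.inl h1.symm)
  · refine ⟨g, ?_, ?_⟩
    · rw [← hg, c.root_smulH, h2, c.one_smulV, c.hMap_smulH, h1]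
    · rw [← hg, ← c.smulH_inv, c.root_smulH, h3, ← c.mul_smulV, one_mul, c.hMap_smulH, h1]
  · have := congrArg c.hMap hg
    rw [c.hMap_smulH, h1, c.hMap_inv] at this
    exact absurd this.symm (X.inv_ne _)

/-- Connectivity in the preimage of `X ∖ F`. -/
def liftRel (c : GCover G Xt X) (F : Finset X.Edge) (a b : Xt.V) : Prop :=
  Relation.ReflTransGen (c.liftStep F) a b

lemma liftStep_symm {a b : Xt.V} (hab : c.liftStep F a b) : c.liftStep F b a := by
  obtain ⟨ht, rfl, rfl, hh⟩ := hab
  exact ⟨Xt.inv ht, rfl, by rw [Xt.inv_inv], by rwa [c.hMap_inv, X.edgeOf_inv]⟩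

lemma liftRel_symm {a b : Xt.V} (hab : liftRel c F a b) : liftRel c F b a := by
  have hs : Std.Symm (c.liftStep F) := ⟨fun _ _ => liftStep_symm⟩
  exact Relation.ReflTransGen.stdSymm.symm _ _ hab

lemma liftRel_trans {a b d : Xt.V} (hab : liftRel c F a b) (hbd : liftRel c F b d) :
    liftRel c F a d := Relation.ReflTransGen.trans hab hbd

lemma liftRel_smul {a b : Xt.V} (g : G) (hab : liftRel c F a b) :
    liftRel c F (c.smulV g a) (c.smulV g b) := by
  refine Relation.ReflTransGen.lift (c.smulV g) ?_ _ _ hab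
  rintro _ _ ⟨ht, rfl, rfl, hh⟩
  exact ⟨c.smulH g ht, c.root_smulH g ht, by rw [← c.smulH_inv, c.root_smulH],
    by rwa [c.hMap_smulH]⟩

/-- Path lifting. -/
lemma exists_liftRel (hrep : c.IsVoltageRep o σ η) (huv : X.compRel F u v) :
    ∃ g : G, liftRel c F (σ u) (c.smulV g (σ v)) := by
  induction huv with
  | refl => exact ⟨1, by rw [c.one_smulV]; exact Relation.ReflTransGen.refl⟩
  | tail _ hs ih =>
    obtain ⟨k, rfl, rfl, hk⟩ := hs
    obtain ⟨g, hg⟩ := ih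
    obtain ⟨ht, h1, h2, h3⟩ := exists_lift hrep k g
    exact ⟨_, hg.tail ⟨ht, h2, h3, by rwa [h1]⟩⟩

/-- The preimage of the component of `v` has `|G|` connected components exactly when distinct
vertices `g • σ v` lie in distinct components. -/
lemma numLiftComponents_eq_iff (hrep : c.IsVoltageRep o σ η) (F : Finset X.Edge) (v : X.V) :
    c.numLiftComponents F v = Fintype.card G ↔
      ∀ g : G, liftRel c F (σ v) (c.smulV g (σ v)) → g = 1 := by
  have hmem : ∀ g : G, X.compRel F v (c.vMap (c.smulV g (σ v))) := fun g => by
    rw [c.vMap_smulV, hrep.sec]; exact compRel_refl _ _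
  set T := {w : Xt.V // X.compRel F v (c.vMap w)}
  set r : T → T → Prop := fun a b => c.liftStep F a.1 b.1
  have hquot : ∀ a b : T, Quot.mk r a = Quot.mk r b ↔ liftRel c F a.1 b.1 := by
    intro a b
    constructor
    · intro hab
      have hab' := Quot.eqvGen_exact hab
      clear hab
      induction hab' with
      | rel x y hxy => exact Relation.ReflTransGen.single hxy
      | refl x => exact Relation.ReflTransGen.refl
      | symm x y _ ih => exact liftRel_symm ih
      | trans x y z _ _ ih1 ih2 => exact liftRel_trans ih1 ih2
    · obtain ⟨b, hb⟩ := b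
      intro hab
      have hab' : Relation.ReflTransGen (c.liftStep F) a.1 b := hab
      clear hab
      induction hab' with
      | refl => rfl
      | tail hxy hyz ih =>
        obtain ⟨ht, rfl, rfl, hh⟩ := hyz
        have hy : X.compRel F v (c.vMap (Xt.root ht)) := by
          have := compRel_step (X := X) (h := X.inv (c.hMap ht)) (F := F)
            (by rwa [X.edgeOf_inv])
          rw [X.inv_inv, c.root_hMap, ← c.hMap_inv, c.root_hMap] at this
          exact compRel_trans hb this
        rw [ih hy]
        exact Quot.sound ⟨ht, rfl, rfl, hh⟩
  let f : G → Quot r := fun g => Quot.mk r ⟨c.smulV g (σ v), hmem g⟩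
  have hf : Function.Surjective f := by
    intro q
    obtain ⟨⟨w, hw⟩, rfl⟩ := Quot.exists_rep q
    obtain ⟨a, ha⟩ := exists_liftRel hrep hw
    obtain ⟨b, hb⟩ := c.vertex_trans (σ (c.vMap w)) w (hrep.sec _)
    refine ⟨b * a⁻¹, (hquot _ _).2 ?_⟩
    have := liftRel_smul (b * a⁻¹) ha
    rwa [← c.mul_smulV, inv_mul_cancel_right, hb] at this
  have hinj : Function.Injective f ↔
      ∀ g : G, liftRel c F (σ v) (c.smulV g (σ v)) → g = 1 := by
    constructor
    · intro hi g hg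
      refine (hi ((hquot _ _).2 ?_)).symm
      change liftRel c F (c.smulV 1 (σ v)) (c.smulV g (σ v))
      rwa [c.one_smulV]
    · intro hg a b hab
      have h1 := liftRel_smul a⁻¹ ((hquot _ _).1 hab)
      change liftRel c F (c.smulV a⁻¹ (c.smulV a (σ v))) (c.smulV a⁻¹ (c.smulV b (σ v))) at h1
      rw [← c.mul_smulV, ← c.mul_smulV, inv_mul_cancel, c.one_smulV] at h1
      exact inv_mul_eq_one.1 (hg _ h1)
  have : Finite (Quot r) := Finite.of_surjective f hf
  rw [← hinj, ← Nat.card_eq_fintype_card]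
  change Nat.card (Quot r) = _ ↔ _
  constructor
  · intro hcard
    exact ((Nat.bijective_iff_surjective_and_card f).2 ⟨hf, hcard.symm⟩).1
  · intro hi
    exact (Nat.card_eq_of_bijective f ⟨hi, hf⟩).symm

/-- The cover is trivial over the component of `v` in `X ∖ F`: no vertex of the component is
dilated and the voltages on it come from a potential. -/
def Triv (c : GCover G Xt X) (o : X.Orientation) (η : X.Edge → G) (F : Finset X.Edge) (v : X.V) :
    Prop :=
  (∀ u, X.compRel F v u → c.dilation u = {1}) ∧ ∃ φ, IsPot o η F v φ

lemma gNontrivialAt_iff (hrep : c.IsVoltageRep o σ η) :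
    c.GNontrivialAt F v ↔ ¬ Triv c o η F v := by
  rw [GCover.GNontrivialAt, ne_eq, numLiftComponents_eq_iff hrep]
  refine not_congr ⟨fun hfree => ⟨?_, ?_⟩, ?_⟩
  · intro u hu
    ext g
    rw [Set.mem_singleton_iff]
    refine ⟨fun hg => ?_, fun hg => hg ▸ one_mem_dilation⟩
    obtain ⟨a, ha⟩ := exists_liftRel hrep hu
    refine hfree g (liftRel_trans ha ?_)
    have := liftRel_smul g (liftRel_symm ha)
    rwa [hg _ (by rw [c.vMap_smulV, hrep.sec])] at this
  · have hex : ∀ u, ∃ g : G, X.compRel F v u → liftRel c F (σ v) (c.smulV g (σ u)) := by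
      intro u
      by_cases hu : X.compRel F v u
      · obtain ⟨g, hg⟩ := exists_liftRel hrep hu
        exact ⟨g, fun _ => hg⟩
      · exact ⟨1, fun hu' => absurd hu' hu⟩
    choose φ hφ using hex
    refine ⟨φ, fun h hh hr => ?_⟩
    obtain ⟨ht, h1, h2, h3⟩ := exists_lift hrep h (φ (X.root h))
    have e1 : liftRel c F (σ v)
        (c.smulV (φ (X.root h) * X.halfVoltage o η h) (σ (X.root (X.inv h)))) :=
      (hφ _ hr).tail ⟨ht, h2, h3, by rwa [h1]⟩
    have e2 := hφ _ (compRel_trans hr (compRel_step hh))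
    set x := φ (X.root h) * X.halfVoltage o η h * (φ (X.root (X.inv h)))⁻¹ with hx
    have e3 := liftRel_symm (liftRel_smul x e2)
    rw [← c.mul_smulV, hx, inv_mul_cancel_right] at e3
    have e4 := hfree x (liftRel_trans e1 e3)
    rw [hx, mul_inv_eq_one] at e4
    rw [← e4]; group
  · rintro ⟨hd, φ, hφ⟩ g hg
    -- Along a lifted walk from `σ v`, the position in the fibre is dictated by the potential.
    have key : ∀ w, liftRel c F (σ v) w → X.compRel F v (c.vMap w) ∧
        w = c.smulV ((φ v)⁻¹ * φ (c.vMap w)) (σ (c.vMap w)) := by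
      intro w hw
      induction hw with
      | refl =>
        rw [hrep.sec, inv_mul_cancel, c.one_smulV]
        exact ⟨compRel_refl _ _, rfl⟩
      | tail _ hs ih =>
        obtain ⟨ht, rfl, rfl, hh⟩ := hs
        obtain ⟨i1, i2⟩ := ih
        obtain ⟨a, ha1, ha2⟩ := lift_form hrep ht
        rw [← c.root_hMap] at i1 i2
        rw [← c.root_hMap, c.hMap_inv]
        refine ⟨compRel_trans i1 (compRel_step hh), ?_⟩
        have e := eq_of_smul_eq hrep (hd _ i1) (ha1.symm.trans i2)
        rw [ha2, hφ _ hh i1, e]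
        congr 1
        group
    have h2 := (key _ hg).2
    rw [c.vMap_smulV, hrep.sec, inv_mul_cancel] at h2
    exact eq_of_smul_eq hrep (hd v (compRel_refl _ _)) h2

lemma Triv.congr (hT : Triv c o η F v) (hu : X.compRel F v u) : Triv c o η F u := by
  obtain ⟨hd, φ, hφ⟩ := hT
  exact ⟨fun w hw => hd w (compRel_trans hu hw), φ, hφ.congr hu⟩

lemma Triv.anti (hT : Triv c o η F v) (hF : F ⊆ F') : Triv c o η F' v := by
  obtain ⟨hd, φ, hφ⟩ := hT
  exact ⟨fun w hw => hd w (compRel_anti hF hw), φ, hφ.anti hF⟩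

lemma triv_of_chi (o : X.Orientation) (η : X.Edge → G) (h0 : X.chi F v = 0)
    (hd : ∀ u, X.compRel F v u → c.dilation u = {1}) : Triv c o η F v :=
  ⟨hd, (allBridges_of_chi h0).exists_pot o η⟩

/-- Deleting an edge can only create a trivial component at one of its two end points. -/
lemma triv_of_insert (hT : Triv c o η (insert (X.edgeOf h) F) v) :
    Triv c o η F v ∨ Triv c o η (insert (X.edgeOf h) F) (X.root h) ∨
      Triv c o η (insert (X.edgeOf h) F) (X.root (X.inv h)) := by
  by_cases h1 : X.compRel (insert (X.edgeOf h) F) v (X.root h)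
  · exact Or.inr (Or.inl (hT.congr h1))
  by_cases h2 : X.compRel (insert (X.edgeOf h) F) v (X.root (X.inv h))
  · exact Or.inr (Or.inr (hT.congr h2))
  left
  have hc : ∀ u, X.compRel F v u → X.compRel (insert (X.edgeOf h) F) v u := by
    intro u hu
    rcases compRel_delete h hu with h3 | h3 | h3
    · exact h3
    · exact absurd h3.1 h1
    · exact absurd h3.1 h2
  obtain ⟨hd, φ, hφ⟩ := hT
  refine ⟨fun u hu => hd u (hc u hu), φ, fun k hk hr => hφ k ?_ (hc _ hr)⟩
  intro hm
  rcases Finset.mem_insert.1 hm with hm | hm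
  · rcases edgeOf_eq hm with rfl | rfl
    · exact h1 (hc _ hr)
    · exact h2 (hc _ hr)
  · exact hk hm

/-- A set is a basis iff it is independent and no single edge can be added to it. -/
lemma isBasisD_iff (hrep : c.IsVoltageRep o σ η) :
    c.IsBasisD F ↔ (∀ v, ¬ Triv c o η F v) ∧ ∀ h, X.edgeOf h ∉ F →
      Triv c o η (insert (X.edgeOf h) F) (X.root h) ∨
      Triv c o η (insert (X.edgeOf h) F) (X.root (X.inv h)) := by
  have hind : ∀ F : Finset X.Edge, c.Indep F ↔ ∀ v, ¬ Triv c o η F v :=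
    fun F => forall_congr' fun v => gNontrivialAt_iff hrep
  simp only [GCover.IsBasisD, hind]
  refine and_congr_right fun hF => ⟨fun hmax h hh => ?_, fun hmax F' hFF' hF' => ?_⟩
  · by_contra hcon
    have := hmax _ (Finset.subset_insert (X.edgeOf h) F) fun v hT => by
      rcases triv_of_insert hT with h1 | h1 | h1
      · exact hF v h1
      · exact hcon (Or.inl h1)
      · exact hcon (Or.inr h1)
    exact hh (this ▸ Finset.mem_insert_self _ _)
  · refine Finset.Subset.antisymm (fun e he => ?_) hFF'
    by_contra heF
    obtain ⟨h, rfl⟩ := X.edgeOf_surjective e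
    have hsub : insert (X.edgeOf h) F ⊆ F' := Finset.insert_subset he hFF'
    rcases hmax h heF with h1 | h1
    · exact hF' _ (h1.anti hsub)
    · exact hF' _ (h1.anti hsub)

end Trivial

/-! ### Components of the complement of a basis -/

section Bases

variable {G : Type} [CommGroup G] [Fintype G] {X Xt : SerreGraph} {c : GCover G Xt X}
  {F : Finset X.Edge} {u v : X.V} {o : X.Orientation} {η : X.Edge → G}

/-- A component of a basis complement that contains a dilated vertex is a tree. -/
lemma allBridges_of_dilated
    (hmax : ∀ h, X.edgeOf h ∉ F → Triv c o η (insert (X.edgeOf h) F) (X.root h) ∨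
      Triv c o η (insert (X.edgeOf h) F) (X.root (X.inv h)))
    (hu : X.compRel F v u) (hd : c.dilation u ≠ {1}) : X.AllBridges F v := by
  intro h hh hr hb
  have hsu := compRel_insert_of_nonbridge hb (compRel_trans (compRel_symm hr) hu)
  rcases hmax h hh with hT | hT
  · exact hd (hT.1 u hsu)
  · exact hd (hT.1 u (compRel_trans (compRel_symm hb) hsu))

/-- A component of a basis complement contains at most one dilated vertex: a walk joining two of
them could be cut at an edge separating them. -/
lemma dilated_unique
    (hmax : ∀ h, X.edgeOf h ∉ F → Triv c o η (insert (X.edgeOf h) F) (X.root h) ∨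
      Triv c o η (insert (X.edgeOf h) F) (X.root (X.inv h)))
    (huv : X.compRel F u v) (hu : c.dilation u ≠ {1}) (hv : c.dilation v ≠ {1}) : u = v := by
  by_contra hne
  obtain ⟨h, rfl, hh, hv'⟩ := exists_departure huv hne
  rcases hmax h hh with hT | hT
  · exact hu (hT.1 _ (compRel_refl _ _))
  · exact hv (hT.1 v hv')

/-- Deleting a non-bridge from a component of a basis complement leaves a trivial component. -/
lemma triv_of_nonbridge
    (hmax : ∀ h, X.edgeOf h ∉ F → Triv c o η (insert (X.edgeOf h) F) (X.root h) ∨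
      Triv c o η (insert (X.edgeOf h) F) (X.root (X.inv h)))
    {h : X.H} (hh : X.edgeOf h ∉ F) (hr : X.compRel F v (X.root h))
    (hb : X.compRel (insert (X.edgeOf h) F) (X.root h) (X.root (X.inv h))) :
    Triv c o η (insert (X.edgeOf h) F) v := by
  have hs := compRel_symm (compRel_insert_of_nonbridge hb hr)
  rcases hmax h hh with hT | hT
  · exact hT.congr hs
  · exact hT.congr (compRel_trans (compRel_symm hb) hs)

/-- A nontrivial component without dilated vertices has genus one as soon as deleting any
non-bridge makes it trivial. If the genus were larger, two edges `h`, `k` could be deleted without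
disconnecting it; the potentials left by deleting `h` alone and `k` alone then agree up to a
constant, and either one is a potential on the whole component. -/
lemma chi_eq_one
    (hmax : ∀ h, X.edgeOf h ∉ F → Triv c o η (insert (X.edgeOf h) F) (X.root h) ∨
      Triv c o η (insert (X.edgeOf h) F) (X.root (X.inv h)))
    (hv : ¬ Triv c o η F v) (hd : ∀ u, X.compRel F v u → c.dilation u = {1}) :
    X.chi F v = 1 := by
  have hpot : ¬ ∃ φ, IsPot o η F v φ := fun hφ => hv ⟨hd, hφ⟩
  have hnb : ¬ X.AllBridges F v := fun hB => hpot (hB.exists_pot o η)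
  simp only [AllBridges, not_forall, not_not] at hnb
  obtain ⟨h, hh, hr, hb⟩ := hnb
  obtain ⟨-, φ, hφ⟩ := triv_of_nonbridge hmax hh hr hb
  suffices hB : X.AllBridges (insert (X.edgeOf h) F) v by
    rw [chi_nonbridge hh hr hb, hB.chi_eq_zero, zero_add]
  intro k hk hkr hkb
  have hkF : X.edgeOf k ∉ F := fun hm => hk (Finset.mem_insert_of_mem hm)
  have hkb' : X.compRel (insert (X.edgeOf k) F) (X.root k) (X.root (X.inv k)) :=
    compRel_anti (Finset.insert_subset_insert _ (Finset.subset_insert _ _)) hkb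
  obtain ⟨-, ψ, hψ⟩ := triv_of_nonbridge hmax hkF (compRel_of_insert hkr) hkb'
  set F'' := insert (X.edgeOf k) (insert (X.edgeOf h) F) with hF''
  have hcomp : ∀ u, X.compRel F v u → X.compRel F'' v u := fun u hu =>
    compRel_insert_of_nonbridge hkb (compRel_insert_of_nonbridge hb hu)
  have hφ' : IsPot o η F'' v φ := hφ.anti (Finset.subset_insert _ _)
  have hψ' : IsPot o η F'' v ψ :=
    hψ.anti (Finset.insert_subset_insert _ (Finset.subset_insert _ _))
  have r1 := hφ'.ratio hψ' (hcomp _ hr)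
  have r2 := hφ'.ratio hψ' (hcomp _ (compRel_trans hr (compRel_step hh)))
  have hhk : X.edgeOf h ∉ insert (X.edgeOf k) F := by
    intro hm
    rcases Finset.mem_insert.1 hm with hm | hm
    · exact hk (hm ▸ Finset.mem_insert_self _ _)
    · exact hh hm
  have e := hψ h hhk (compRel_insert_of_nonbridge hkb' hr)
  refine hpot ⟨φ, hφ.of_insert hb ?_⟩
  rw [e, mul_inv_eq_iff_eq_mul.1 r1, mul_inv_eq_iff_eq_mul.1 r2]
  group

/-- A cycle in a component of a basis complement without dilated vertices has nontrivial voltage: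
deleting its first edge leaves a trivial component, whose potential would otherwise extend. -/
lemma cycle_voltage_ne_one
    (hmax : ∀ h, X.edgeOf h ∉ F → Triv c o η (insert (X.edgeOf h) F) (X.root h) ∨
      Triv c o η (insert (X.edgeOf h) F) (X.root (X.inv h)))
    (hv : ¬ Triv c o η F v) (hd : ∀ u, X.compRel F v u → c.dilation u = {1})
    {l : List X.H} (hl : X.IsEdgeCycle (X.edgesIn F (X.compVerts F v)) l) :
    X.pathVoltage o η l ≠ 1 := by
  obtain ⟨⟨hne, hchain⟩, hmem, hnd⟩ := hl
  obtain _ | ⟨h, t⟩ := l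
  · exact absurd rfl hne
  have hc : List.IsChain (fun a b => X.root (X.inv a) = X.root b) (h :: (t ++ [h])) :=
    hchain
  obtain ⟨hh, hr⟩ := mem_edgesIn_compVerts.1 (hmem h (by simp))
  rw [List.map_cons, List.nodup_cons] at hnd
  have ht : ∀ x ∈ t, X.edgeOf x ∉ insert (X.edgeOf h) F := by
    intro x hx hm
    rcases Finset.mem_insert.1 hm with hm | hm
    · exact hnd.1 (hm ▸ List.mem_map_of_mem hx)
    · exact (mem_edgesIn_compVerts.1 (hmem x (by simp [hx]))).1 hm
  have hb := compRel_symm (compRel_of_trail t ht hc)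
  obtain ⟨-, φ, hφ⟩ := triv_of_nonbridge hmax hh hr hb
  intro h1
  refine hv ⟨hd, φ, hφ.of_insert hb ?_⟩
  rw [pathVoltage_cons, hφ.prod_trail t ht
    (compRel_trans (compRel_insert_of_nonbridge hb hr) hb) hc] at h1
  rw [eq_inv_of_mul_eq_one_left h1]
  group

/-- A component of genus one in which all cycles have nontrivial voltage carries no
potential. -/
lemma not_triv_of_cycles (h1 : X.chi F v = 1)
    (hcyc : ∀ l : List X.H, X.IsEdgeCycle (X.edgesIn F (X.compVerts F v)) l →
      X.pathVoltage o η l ≠ 1) : ¬ Triv c o η F v := by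
  rintro ⟨-, φ, hφ⟩
  have hnb : ¬ X.AllBridges F v := fun hB => by
    rw [hB.chi_eq_zero] at h1; exact absurd h1 (by norm_num)
  simp only [AllBridges, not_forall, not_not] at hnb
  obtain ⟨h, hh, hr, hb⟩ := hnb
  obtain ⟨t, ht, hnd, hc⟩ := exists_trail (compRel_symm hb)
  have htF : ∀ x ∈ t, X.edgeOf x ∉ F := fun x hx hm => ht x hx (Finset.mem_insert_of_mem hm)
  have hrt : ∀ x ∈ t, X.compRel F (X.root (X.inv h)) (X.root x) := by
    intro x hx
    obtain ⟨t₁, t₂, rfl⟩ := List.append_of_mem hx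
    refine compRel_of_trail (h := h) (k := x) t₁ (fun y hy => htF y (by simp [hy])) ?_
    have hc' : List.IsChain (fun a b => X.root (X.inv a) = X.root b)
        ((h :: (t₁ ++ [x])) ++ (t₂ ++ [h])) := by simpa using hc
    exact hc'.left_of_append
  refine hcyc (h :: t) ⟨⟨by simp, hc⟩, ?_, ?_⟩ (hφ.closed t htF hh hr hc)
  · rintro x (_ | ⟨_, hx⟩)
    · exact mem_edgesIn_compVerts.2 ⟨hh, hr⟩
    · exact mem_edgesIn_compVerts.2 ⟨htF x hx,
        compRel_trans hr (compRel_trans (compRel_step hh) (hrt x hx))⟩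
  · rw [List.map_cons, List.nodup_cons]
    refine ⟨fun hm => ?_, hnd⟩
    obtain ⟨x, hx, hxe⟩ := List.mem_map.1 hm
    exact ht x hx (by rw [hxe]; exact Finset.mem_insert_self _ _)

/-- Deleting an edge from an undilated component of genus one leaves a trivial component. -/
lemma triv_of_genus_one {h : X.H} (hh : X.edgeOf h ∉ F) (h1 : X.chi F (X.root h) = 1)
    (hd : ∀ u, X.compRel F (X.root h) u → c.dilation u = {1}) :
    Triv c o η (insert (X.edgeOf h) F) (X.root h) ∨
      Triv c o η (insert (X.edgeOf h) F) (X.root (X.inv h)) := by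
  have hds : ∀ u, X.compRel (insert (X.edgeOf h) F) (X.root h) u → c.dilation u = {1} :=
    fun u hu => hd u (compRel_of_insert hu)
  have hdt : ∀ u, X.compRel (insert (X.edgeOf h) F) (X.root (X.inv h)) u → c.dilation u = {1} :=
    fun u hu => hd u (compRel_trans (compRel_step hh) (compRel_of_insert hu))
  by_cases hb : X.compRel (insert (X.edgeOf h) F) (X.root h) (X.root (X.inv h))
  · rw [chi_nonbridge hh (compRel_refl _ _) hb] at h1
    exact Or.inl (triv_of_chi o η (by omega) hds)
  · rw [chi_bridge hh hb] at h1
    have n1 := chi_nonneg (insert (X.edgeOf h) F) (X.root h)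
    have n2 := chi_nonneg (insert (X.edgeOf h) F) (X.root (X.inv h))
    by_cases h0 : X.chi (insert (X.edgeOf h) F) (X.root h) = 0
    · exact Or.inl (triv_of_chi o η h0 hds)
    · exact Or.inr (triv_of_chi o η (by omega) hdt)

/-- Deleting an edge from a tree with at most one dilated vertex leaves a trivial component. -/
lemma triv_of_tree {h : X.H} (hh : X.edgeOf h ∉ F) (h0 : X.chi F (X.root h) = 0)
    (hd : ∀ u w, X.compRel F (X.root h) u → X.compRel F (X.root h) w →
      c.dilation u ≠ {1} → c.dilation w ≠ {1} → u = w) :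
    Triv c o η (insert (X.edgeOf h) F) (X.root h) ∨
      Triv c o η (insert (X.edgeOf h) F) (X.root (X.inv h)) := by
  have hb := allBridges_of_chi h0 h hh (compRel_refl _ _)
  rw [chi_bridge hh hb] at h0
  have n1 := chi_nonneg (insert (X.edgeOf h) F) (X.root h)
  have n2 := chi_nonneg (insert (X.edgeOf h) F) (X.root (X.inv h))
  by_cases hds : ∀ u, X.compRel (insert (X.edgeOf h) F) (X.root h) u → c.dilation u = {1}
  · exact Or.inl (triv_of_chi o η (by omega) hds)
  · push Not at hds
    obtain ⟨u, hu, hud⟩ := hds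
    refine Or.inr (triv_of_chi o η (by omega) fun w hw => ?_)
    by_contra hwd
    have := hd u w (compRel_of_insert hu)
      (compRel_trans (compRel_step hh) (compRel_of_insert hw)) hud hwd
    exact hb (compRel_trans hu (compRel_symm (this ▸ hw)))

end Bases

end SerreGraph

open SerreGraph in
/-- **Lemma (characterization of bases).** Let `p : X̃ → X` be a nontrivial harmonic
`G`-cover with abelian Galois group `G`, defined by a dilated `G`-voltage assignment `η`.
A set `F ⊆ E(X)` is a basis of `M*(X̃/X)` if and only if each connected component `C` of
`X ∖ F` is exactly one of: (1) a graph of genus one with no dilated vertices whose unique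
cycle has voltage different from the identity; (2) a tree containing a unique dilated
vertex. -/
theorem isBasis_iff_components
    (G : Type) [CommGroup G] [Fintype G] (X Xt : SerreGraph)
    (hX : X.Connected) (c : GCover G Xt X)
    (hnontrivial : ∀ v : X.V, c.GNontrivialAt ∅ v)
    (o : X.Orientation) (σ : X.V → Xt.V) (η : X.Edge → G)
    (hrep : c.IsVoltageRep o σ η)
    (F : Finset X.Edge) :
    c.IsBasisD F ↔ ∀ C ∈ X.components F,
      ((X.edgesIn F C).card = C.card ∧
        (∀ v ∈ C, c.dilation v = {1}) ∧
        (∀ l : List X.H, X.IsEdgeCycle (X.edgesIn F C) l →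
          X.pathVoltage o η l ≠ 1)) ∨
      ((X.edgesIn F C).card + 1 = C.card ∧
        ∃! v : X.V, v ∈ C ∧ c.dilation v ≠ {1}) := by
  rw [isBasisD_iff hrep]
  constructor
  · rintro ⟨hI, hmax⟩ C hC
    obtain ⟨v, -, rfl⟩ := Finset.mem_image.1 hC
    by_cases hdil : ∀ u, X.compRel F v u → c.dilation u = {1}
    · left
      refine ⟨?_, fun u hu => hdil u (mem_compVerts.1 hu),
        fun l hl => cycle_voltage_ne_one hmax (hI v) hdil hl⟩
      have := chi_eq_one hmax (hI v) hdil
      unfold chi at this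
      omega
    · right
      push Not at hdil
      obtain ⟨u, hu, hud⟩ := hdil
      refine ⟨?_, u, ⟨mem_compVerts.2 hu, hud⟩, ?_⟩
      · have := (allBridges_of_dilated hmax hu hud).chi_eq_zero
        unfold chi at this
        omega
      · rintro w ⟨hw, hwd⟩
        exact dilated_unique hmax
          (compRel_trans (compRel_symm (mem_compVerts.1 hw)) hu) hwd hud
  · intro hC
    have hC' := fun v => hC (X.compVerts F v)
      (Finset.mem_image_of_mem _ (Finset.mem_univ v))
    refine ⟨fun v => ?_, fun h hh => ?_⟩
    · rcases hC' v with ⟨h1, -, h3⟩ | ⟨-, u, ⟨hu, hud⟩, -⟩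
      · exact not_triv_of_cycles (by unfold chi; omega) h3
      · exact fun hT => hud (hT.1 u (mem_compVerts.1 hu))
    · rcases hC' (X.root h) with ⟨h1, h2, -⟩ | ⟨h1, h2⟩
      · exact triv_of_genus_one hh (by unfold chi; omega)
          fun u hu => h2 u (mem_compVerts.2 hu)
      · exact triv_of_tree hh (by unfold chi; omega) fun u w hu hw hud hwd =>
          h2.unique ⟨mem_compVerts.2 hu, hud⟩ ⟨mem_compVerts.2 hw, hwd⟩
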